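/- arXiv:1407.2961 — 9 statements merged into one kernel-verified Lean document; each statement's English description precedes it below -/
import Mathlib

section
/- Under the stated hypotheses, the mean shift sequence (y_j) converges: there exists y* ∈ ℝ such that y_j → y* as j → ∞. -/
open Filter Finset

lemma ms_tangent (k : ℝ → ℝ) (hk : ConvexOn ℝ (Set.Ici 0) k) (hd : Differentiable ℝ k)
    (s t : ℝ) (hs : 0 ≤ s) (ht : 0 ≤ t) : deriv k s * (t - s) ≤ k t - k s := by
  rcases lt_trichotomy s t with hst | hst | hst
  · have := hk.le_slope_of_hasDerivAt (Set.mem_Ici.2 hs) (Set.mem_Ici.2 ht) hst (hd s).hasDerivAt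
    rw [slope_def_field, le_div_iff₀ (by linarith)] at this
    exact this
  · subst hst; simp
  · have := hk.slope_le_of_hasDerivAt (Set.mem_Ici.2 ht) (Set.mem_Ici.2 hs) hst (hd s).hasDerivAt
    rw [slope_def_field, div_le_iff₀ (by linarith)] at this
    linarith

/-- A bounded sequence of iterates of a continuous map with vanishing steps converges. -/
lemma ms_conv (T : ℝ → ℝ) (hT : Continuous T) (y : ℕ → ℝ) (hy : ∀ j, y (j+1) = T (y j))
    (R : ℝ) (hR : ∀ j, |y j| ≤ R) (hstep : Tendsto (fun j => y (j+1) - y j) atTop (nhds 0)) :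
    ∃ z, Tendsto y atTop (nhds z) := by
  refine tendsto_of_no_upcrossings (s := Set.univ) dense_univ ?_
    (isBoundedUnder_of ⟨R, fun j => (abs_le.1 (hR j)).2⟩)
    (isBoundedUnder_of ⟨-R, fun j => (abs_le.1 (hR j)).1⟩)
  rintro a - b - hab ⟨ha, hb⟩
  -- frequent visits
  have visit : ∀ z, a ≤ z → z ≤ b → ∀ ε > 0, ∀ N, ∃ j ≥ N, |y j - z| < ε := by
    intro z hz1 hz2 ε hε N
    obtain ⟨N1, hN1⟩ := (Metric.tendsto_atTop.1 hstep) ε hε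
    obtain ⟨p, hp, hpa⟩ := (frequently_atTop.1 ha) (max N N1)
    obtain ⟨q, hq, hqb⟩ := (frequently_atTop.1 hb) p
    by_contra! hcon
    have : ∀ m, y (p + m) < z := by
      intro m
      induction m with
      | zero => simpa using lt_of_lt_of_le hpa hz1
      | succ m ih =>
        by_contra! hge
        have h1 := hN1 (p+m) (by have := le_max_right N N1; omega)
        have h2 := hcon (p+m) (by have := le_max_left N N1; omega)
        rw [Real.dist_eq, sub_zero] at h1
        have h3 := (abs_lt.1 h1).2
        rw [abs_of_neg (by linarith)] at h2
        have h4 : y (p + (m+1)) = y (p+m+1) := rfl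
        linarith
    have h5 := this (q - p)
    rw [Nat.add_sub_cancel' hq] at h5
    linarith
  have fixed : ∀ z, a ≤ z → z ≤ b → T z = z := by
    intro z hz1 hz2
    by_contra hne
    have hd : 0 < |T z - z| := abs_pos.2 (sub_ne_zero.2 hne)
    have hc : Continuous (fun w => |T w - w|) := by fun_prop
    have hev : ∀ᶠ w in nhds z, |T z - z| / 2 < |T w - w| :=
      (hc.tendsto z).eventually (lt_mem_nhds (by linarith))
    obtain ⟨ε, hε, hball⟩ := Metric.eventually_nhds_iff.1 hev
    obtain ⟨N1, hN1⟩ := (Metric.tendsto_atTop.1 hstep) (|T z - z| / 2) (by linarith)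
    obtain ⟨j, hj, hjz⟩ := visit z hz1 hz2 ε hε N1
    have h1 := hN1 j hj
    have h2 := hball (y := y j) (by rwa [Real.dist_eq])
    rw [Real.dist_eq, sub_zero, hy] at h1
    linarith
  obtain ⟨j, -, hj⟩ := visit ((a+b)/2) (by linarith) (by linarith) ((b-a)/2) (by linarith) 0
  obtain ⟨h1, h2⟩ := abs_lt.1 hj
  have hfix := fixed (y j) (by linarith) (by linarith)
  have hconst : ∀ m, y (j + m) = y j := by
    intro m
    induction m with
    | zero => rfl
    | succ m ih => rw [← add_assoc, hy, ih, hfix]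
  obtain ⟨p, hp, hpa⟩ := (frequently_atTop.1 ha) j
  have h5 := hconst (p - j)
  rw [Nat.add_sub_cancel' hp] at h5
  linarith

theorem mean_shift_converges
(n : ℕ) (hn : 0 < n) (x : Fin n → ℝ) (h : ℝ) (hh : 0 < h)
(c : ℝ) (hc : 0 < c)
    (k g : ℝ → ℝ)
    (hk_nonneg : ∀ t ∈ Set.Ici (0:ℝ), 0 ≤ k t)
    (hk_conv : ConvexOn ℝ (Set.Ici 0) k)
    (hk_smooth : ContDiff ℝ 1 k)
    (hk_anti : StrictAntiOn k (Set.Ici 0))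
    (hg : ∀ t, g t = -(deriv k t))
    (hg_pos : ∀ t ∈ Set.Ici (0:ℝ), 0 < g t)
    (hg_anti : StrictAntiOn g (Set.Ici 0))
    (f T : ℝ → ℝ)
    (hf : ∀ z, f z = c / (n * h) * ∑ i, k (((z - x i) / h) ^ 2))
    (hT : ∀ z, T z = (∑ i, x i * g (((z - x i) / h) ^ 2)) / (∑ i, g (((z - x i) / h) ^ 2)))
(y : ℕ → ℝ) (hy0 : ∃ i, y 0 = x i) (hyit : ∀ j, y (j + 1) = T (y j)) :
    ∃ ystar : ℝ, Tendsto y atTop (nhds ystar) := by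
  have hd : Differentiable ℝ k := hk_smooth.differentiable (by norm_num)
  have hgc : Continuous g := by
    have : g = fun t => -(deriv k t) := funext hg
    rw [this]
    exact (hk_smooth.continuous_deriv (by norm_num)).neg
  have hgp : ∀ z i, 0 < g (((z - x i) / h) ^ 2) := fun z i => hg_pos _ (Set.mem_Ici.2 (sq_nonneg _))
  have hne : (Finset.univ : Finset (Fin n)).Nonempty := ⟨⟨0, hn⟩, Finset.mem_univ _⟩
  have hS : ∀ z, 0 < ∑ i, g (((z - x i) / h) ^ 2) := fun z =>
    Finset.sum_pos (fun i _ => hgp z i) hne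
  have hTc : Continuous T := by
    rw [show T = _ from funext hT]
    exact Continuous.div (by fun_prop) (by fun_prop) (fun z => (hS z).ne')
  set R := ∑ i, |x i| with hRdef
  have hxR : ∀ i, |x i| ≤ R := fun i =>
    Finset.single_le_sum (f := fun i => |x i|) (fun i _ => abs_nonneg _) (Finset.mem_univ i)
  have hTR : ∀ z, |T z| ≤ R := by
    intro z
    rw [hT, abs_div, abs_of_pos (hS z), div_le_iff₀ (hS z), Finset.mul_sum]
    refine (Finset.abs_sum_le_sum_abs _ _).trans (Finset.sum_le_sum fun i _ => ?_)
    rw [abs_mul, abs_of_pos (hgp z i)]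
    exact mul_le_mul_of_nonneg_right (hxR i) (hgp z i).le
  have hyR : ∀ j, |y j| ≤ R := by
    intro j
    cases j with
    | zero => obtain ⟨i, hi⟩ := hy0; rw [hi]; exact hxR i
    | succ j => rw [hyit]; exact hTR _
  refine ms_conv T hTc y hyit R hyR ?_
  set F : ℝ → ℝ := fun z => ∑ i, k (((z - x i) / h) ^ 2) with hF
  have asc : ∀ z, (∑ i, g (((z - x i) / h) ^ 2)) * (T z - z) ^ 2 / h ^ 2 ≤ F (T z) - F z := by
    intro z
    have hTS : T z * (∑ i, g (((z - x i) / h) ^ 2)) = ∑ i, x i * g (((z - x i) / h) ^ 2) := by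
      rw [hT z]; exact div_mul_cancel₀ _ (hS z).ne'
    have h1 : ∑ i, g (((z - x i) / h) ^ 2) * (((z - x i) / h) ^ 2 - ((T z - x i) / h) ^ 2)
        ≤ F (T z) - F z := by
      rw [hF]
      simp only
      rw [← Finset.sum_sub_distrib]
      refine Finset.sum_le_sum fun i _ => ?_
      have := ms_tangent k hk_conv hd (((z - x i) / h) ^ 2) (((T z - x i) / h) ^ 2)
        (sq_nonneg _) (sq_nonneg _)
      rw [hg]
      linarith
    refine le_trans (le_of_eq ?_) h1
    have h2 : ∑ i, g (((z - x i) / h) ^ 2) * (((z - x i) / h) ^ 2 - ((T z - x i) / h) ^ 2)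
        = (z - T z) / h ^ 2 * ((z + T z) * (∑ i, g (((z - x i) / h) ^ 2))
          - 2 * ∑ i, x i * g (((z - x i) / h) ^ 2)) := by
      rw [Finset.mul_sum, Finset.mul_sum, ← Finset.sum_sub_distrib, Finset.mul_sum]
      refine Finset.sum_congr rfl fun i _ => ?_
      generalize g (((z - x i) / h) ^ 2) = G
      field_simp
      ring
    rw [h2, ← hTS]
    ring
  set δ := g ((2 * R / h) ^ 2) with hδ
  have hδp : 0 < δ := hg_pos _ (Set.mem_Ici.2 (sq_nonneg _))
  have hSδ : ∀ j, δ ≤ ∑ i, g (((y j - x i) / h) ^ 2) := by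
    intro j
    have h1 : g (((y j - x ⟨0, hn⟩) / h) ^ 2) ≤ ∑ i, g (((y j - x i) / h) ^ 2) :=
      Finset.single_le_sum (f := fun i => g (((y j - x i) / h) ^ 2))
        (fun i _ => (hgp (y j) i).le) (Finset.mem_univ _)
    refine le_trans ?_ h1
    refine hg_anti.antitoneOn (Set.mem_Ici.2 (sq_nonneg _)) (Set.mem_Ici.2 (sq_nonneg _)) ?_
    have h3 := abs_le.1 (hyR j)
    have h4 := abs_le.1 (hxR ⟨0, hn⟩)
    rw [div_pow, div_pow]
    refine div_le_div_of_nonneg_right ?_ (sq_nonneg _)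
    exact sq_le_sq' (by linarith) (by linarith)
  have key : ∀ j, (y (j+1) - y j) ^ 2 ≤ (h ^ 2 / δ) * (F (y (j+1)) - F (y j)) := by
    intro j
    have h1 := asc (y j)
    rw [← hyit] at h1
    have h2 := mul_le_mul_of_nonneg_right (hSδ j) (sq_nonneg (y (j+1) - y j))
    rw [div_le_iff₀ (by positivity)] at h1
    rw [div_mul_eq_mul_div, le_div_iff₀ hδp]
    linarith
  have hmono : Monotone (fun j => F (y j)) := by
    refine monotone_nat_of_le_succ fun j => ?_
    have h1 := (sq_nonneg _).trans (key j)
    have h2 : 0 < h ^ 2 / δ := by positivity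
    have := nonneg_of_mul_nonneg_right h1 h2
    linarith
  have hbdd : BddAbove (Set.range fun j => F (y j)) := by
    refine ⟨∑ i : Fin n, k 0, ?_⟩
    rintro _ ⟨j, rfl⟩
    exact Finset.sum_le_sum fun i _ =>
      hk_anti.antitoneOn (Set.mem_Ici.2 le_rfl) (Set.mem_Ici.2 (sq_nonneg _)) (sq_nonneg _)
  have hlim := tendsto_atTop_ciSup hmono hbdd
  have hdiff := ((hlim.comp (tendsto_add_atTop_nat 1)).sub hlim).const_mul (h ^ 2 / δ)
  rw [sub_self, mul_zero] at hdiff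
  have hsq : Tendsto (fun j => (y (j+1) - y j) ^ 2) atTop (nhds 0) :=
    squeeze_zero (fun j => sq_nonneg _) key hdiff
  have habs := hsq.sqrt
  simp only [Real.sqrt_sq_eq_abs, Real.sqrt_zero] at habs
  exact (tendsto_zero_iff_abs_tendsto_zero _).2 habs
end

section
/- If f'(x_i) = 0 for some data point x_i, then either the mean shift sequence (y_j) converges to one of the data points x_i satisfying f'(x_i) = 0, or there exists N such that the sequence (y_j)_{j ≥ N} is monotone (and hence convergent). -/
open Filter Finset

lemma ms_cross (u : ℕ → ℝ) (hs : Tendsto (fun j => u (j+1) - u j) atTop (nhds 0)) (a b : ℝ)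
    (hab : a < b) (h1 : ∃ᶠ j in atTop, u j < a) (h2 : ∃ᶠ j in atTop, b < u j) :
    ∃ᶠ j in atTop, a ≤ u j ∧ u j ≤ b := by
  intro hne
  have hst : ∀ᶠ j in atTop, u (j+1) - u j < b - a := hs.eventually_lt_const (by linarith)
  obtain ⟨N, hN⟩ := eventually_atTop.1 (hne.and hst)
  obtain ⟨m, hm, hma⟩ := frequently_atTop.1 h1 N
  have key : ∀ j ≥ m, u j < a := by
    intro j hj
    induction j, hj using Nat.le_induction with
    | base => exact hma
    | succ j hj ih =>
      have e1 := (hN (j+1) (by omega)).1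
      have e2 := (hN j (by omega)).2
      by_contra hcon
      exact e1 ⟨not_lt.1 hcon, by linarith⟩
  obtain ⟨p, hp, hpb⟩ := frequently_atTop.1 h2 m
  have := key p hp
  linarith

theorem mean_shift_of_deriv_zero_at_data_point
(n : ℕ) (hn : 0 < n) (x : Fin n → ℝ) (h : ℝ) (hh : 0 < h)
(c : ℝ) (hc : 0 < c)
    (k g : ℝ → ℝ)
    (hk_nonneg : ∀ t ∈ Set.Ici (0:ℝ), 0 ≤ k t)
    (hk_conv : ConvexOn ℝ (Set.Ici 0) k)
    (hk_smooth : ContDiff ℝ 1 k)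
    (hk_anti : StrictAntiOn k (Set.Ici 0))
    (hg : ∀ t, g t = -(deriv k t))
    (hg_pos : ∀ t ∈ Set.Ici (0:ℝ), 0 < g t)
    (hg_anti : StrictAntiOn g (Set.Ici 0))
    (f T : ℝ → ℝ)
    (hf : ∀ z, f z = c / (n * h) * ∑ i, k (((z - x i) / h) ^ 2))
    (hT : ∀ z, T z = (∑ i, x i * g (((z - x i) / h) ^ 2)) / (∑ i, g (((z - x i) / h) ^ 2)))
(y : ℕ → ℝ) (hy0 : ∃ i, y 0 = x i) (hyit : ∀ j, y (j + 1) = T (y j))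
    (hfx : ∃ i, deriv f (x i) = 0) :
    (∃ i, deriv f (x i) = 0 ∧ Tendsto y atTop (nhds (x i))) ∨
      ∃ N : ℕ, ((∀ j ≥ N, y j ≤ y (j + 1)) ∨ (∀ j ≥ N, y (j + 1) ≤ y j)) ∧
        ∃ ystar : ℝ, Tendsto y atTop (nhds ystar) := by
  right
  have hgc : Continuous g := by
    have : g = fun t => -(deriv k t) := funext hg
    rw [this]
    exact (hk_smooth.continuous_deriv (by norm_num)).neg
  have hkd : Differentiable ℝ k := hk_smooth.differentiable (by norm_num)
  have hgp : ∀ z i, 0 < g (((z - x i) / h) ^ 2) := fun z i => hg_pos _ (Set.mem_Ici.2 (sq_nonneg _))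
  have hne : (univ : Finset (Fin n)).Nonempty := ⟨⟨0, hn⟩, mem_univ _⟩
  set G : ℝ → ℝ := fun z => ∑ i, g (((z - x i) / h) ^ 2) with hG
  have hGp : ∀ z, 0 < G z := fun z => Finset.sum_pos (fun i _ => hgp z i) hne
  have hS : ∀ z d, ∑ i, (x i - d) * g (((z - x i) / h) ^ 2) = G z * (T z - d) := by
    intro z d
    have h1 : G z * T z = ∑ i, x i * g (((z - x i) / h) ^ 2) := by
      rw [hT]; exact mul_div_cancel₀ _ (hGp z).ne'
    rw [mul_sub, h1, hG, Finset.sum_mul, ← Finset.sum_sub_distrib]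
    exact Finset.sum_congr rfl fun i _ => by ring
  have hGc : Continuous G := by
    apply continuous_finsetSum
    intro i _
    exact hgc.comp (by fun_prop)
  have hTc : Continuous T := by
    have : T = fun z => (∑ i, x i * g (((z - x i) / h) ^ 2)) / G z := funext hT
    rw [this]
    refine Continuous.div ?_ hGc fun z => (hGp z).ne'
    apply continuous_finsetSum
    intro i _
    exact continuous_const.mul (hgc.comp (by fun_prop))
  -- bounds
  obtain ⟨M, hM⟩ : ∃ M, ∀ i, |x i| ≤ M :=
    ⟨∑ i, |x i|, fun i => Finset.single_le_sum (f := fun i => |x i|)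
      (fun i _ => abs_nonneg _) (mem_univ i)⟩
  have hTle : ∀ z, T z ≤ M := by
    intro z
    have h1 : G z * (T z - M) ≤ 0 := by
      rw [← hS]
      apply Finset.sum_nonpos
      intro i _
      have := (abs_le.1 (hM i)).2
      exact mul_nonpos_of_nonpos_of_nonneg (by linarith) (hgp z i).le
    by_contra hcon
    have := mul_pos (hGp z) (sub_pos.2 (not_le.1 hcon))
    linarith
  have hTge : ∀ z, -M ≤ T z := by
    intro z
    have h1 : 0 ≤ G z * (T z - (-M)) := by
      rw [← hS]
      apply Finset.sum_nonneg
      intro i _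
      have := (abs_le.1 (hM i)).1
      exact mul_nonneg (by linarith) (hgp z i).le
    have := nonneg_of_mul_nonneg_right h1 (hGp z)
    linarith
  have hyM : ∀ j, -M ≤ y j ∧ y j ≤ M := by
    intro j
    cases j with
    | zero => obtain ⟨i, hi⟩ := hy0; rw [hi]; exact abs_le.1 (hM i)
    | succ j => rw [hyit]; exact ⟨hTge _, hTle _⟩
  -- ascent
  set F : ℝ → ℝ := fun z => ∑ i, k (((z - x i) / h) ^ 2) with hF
  have hconv : ∀ a b : ℝ, 0 ≤ a → 0 ≤ b → g a * (a - b) ≤ k b - k a := by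
    intro a b ha hb
    rw [hg]
    have hd := (hkd a).hasDerivAt
    rcases lt_trichotomy a b with hab | hab | hab
    · have := hk_conv.le_slope_of_hasDerivAt ha hb hab hd
      rw [slope_def_field, le_div_iff₀ (by linarith)] at this
      linarith
    · subst hab; simp
    · have := hk_conv.slope_le_of_hasDerivAt hb ha hab hd
      rw [slope_def_field, div_le_iff₀ (by linarith)] at this
      linarith
  have hasc : ∀ z, G z * (T z - z) ^ 2 / h ^ 2 ≤ F (T z) - F z := by
    intro z
    have h1 : G z * (T z - z) ^ 2 / h ^ 2 = ∑ i, g (((z - x i) / h) ^ 2) *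
        (((z - x i) / h) ^ 2 - ((T z - x i) / h) ^ 2) := by
      have h2 : ∀ i, g (((z - x i) / h) ^ 2) *
        (((z - x i) / h) ^ 2 - ((T z - x i) / h) ^ 2) =
         ((x i - (z + T z) / 2) * g (((z - x i) / h) ^ 2)) * (2 * (T z - z) / h ^ 2) := by
        intro i; field_simp; ring
      rw [Finset.sum_congr rfl fun i _ => h2 i, ← Finset.sum_mul, hS]
      field_simp; ring
    rw [h1, hF, ← Finset.sum_sub_distrib]
    exact Finset.sum_le_sum fun i _ => hconv _ _ (sq_nonneg _) (sq_nonneg _)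
  have hFmono : Monotone fun j => F (y j) := by
    apply monotone_nat_of_le_succ
    intro j
    have h1 := hasc (y j)
    rw [← hyit] at h1
    have : 0 ≤ G (y j) * (y (j+1) - y j) ^ 2 / h ^ 2 :=
      div_nonneg (mul_nonneg (hGp _).le (sq_nonneg _)) (sq_nonneg _)
    linarith
  have hFb : BddAbove (Set.range fun j => F (y j)) := by
    refine ⟨∑ i : Fin n, k 0, ?_⟩
    rintro _ ⟨j, rfl⟩
    exact Finset.sum_le_sum fun i _ => hk_anti.antitoneOn (Set.mem_Ici.2 le_rfl)
      (Set.mem_Ici.2 (sq_nonneg _)) (sq_nonneg _)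
  have hFt := tendsto_atTop_ciSup hFmono hFb
  have hFd : Tendsto (fun j => F (y (j+1)) - F (y j)) atTop (nhds 0) := by
    have := ((tendsto_add_atTop_iff_nat 1).2 hFt).sub hFt
    simpa using this
  have hGlow : ∃ δ > 0, ∀ j, δ ≤ G (y j) := by
    have hMM : -M ≤ M := (hyM 0).1.trans (hyM 0).2
    obtain ⟨p, hp, hmin⟩ := (isCompact_Icc (a := -M) (b := M)).exists_isMinOn
      ⟨M, hMM, le_rfl⟩ hGc.continuousOn
    exact ⟨G p, hGp p, fun j => hmin (hyM j)⟩
  obtain ⟨δ, hδ, hGδ⟩ := hGlow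
  have hsq : Tendsto (fun j => (y (j+1) - y j) ^ 2) atTop (nhds 0) := by
    have h0 : Tendsto (fun j => h ^ 2 / δ * (F (y (j+1)) - F (y j))) atTop (nhds 0) := by
      simpa using hFd.const_mul (h ^ 2 / δ)
    refine squeeze_zero (fun j => sq_nonneg _) (fun j => ?_) h0
    have h1 := hasc (y j)
    rw [← hyit, div_le_iff₀ (by positivity)] at h1
    have h2 : δ * (y (j+1) - y j) ^ 2 ≤ G (y j) * (y (j+1) - y j) ^ 2 :=
      mul_le_mul_of_nonneg_right (hGδ j) (sq_nonneg _)
    rw [div_mul_eq_mul_div, le_div_iff₀ hδ]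
    linarith
  have hstep : Tendsto (fun j => y (j+1) - y j) atTop (nhds 0) := by
    have := hsq.sqrt
    simp only [Real.sqrt_sq_eq_abs, Real.sqrt_zero] at this
    exact (tendsto_zero_iff_abs_tendsto_zero _).2 this
  have hconst : ∀ j, T (y j) = y j → ∀ m ≥ j, y m = y j := by
    intro j hj m hm
    induction m, hm using Nat.le_induction with
    | base => rfl
    | succ m hm ih => rw [hyit, ih, hj]
  have hlim : ∃ ystar : ℝ, Tendsto y atTop (nhds ystar) := by
    refine tendsto_of_no_upcrossings (s := Set.univ) dense_univ ?_
      (isBoundedUnder_of ⟨M, fun j => (hyM j).2⟩) (isBoundedUnder_of ⟨-M, fun j => (hyM j).1⟩)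
    rintro a - b - hab ⟨hA, hB⟩
    have hfix : ∀ p, a < p → p < b → T p = p := by
      intro p hap hpb
      by_contra hTp
      have hpos : 0 < |T p - p| / 2 := by
        have := abs_pos.2 (sub_ne_zero.2 hTp); linarith
      have hcont : Continuous fun z => |T z - z| := (hTc.sub continuous_id).abs
      have hev : ∀ᶠ z in nhds p, |T p - p| / 2 < |T z - z| :=
        hcont.continuousAt.eventually_const_lt (show |T p - p| / 2 < |T p - p| by linarith)
      obtain ⟨ε, hε, hball⟩ := Metric.eventually_nhds_iff.1
        (hev.and ((eventually_gt_nhds hap).and (eventually_lt_nhds hpb)))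
      have hl := (hball (y := p - ε / 2) (by rw [Real.dist_eq, abs_lt]; constructor <;> linarith)).2
      have hr := (hball (y := p + ε / 2) (by rw [Real.dist_eq, abs_lt]; constructor <;> linarith)).2
      have hfr := ms_cross y hstep (p - ε/2) (p + ε/2) (by linarith)
        (hA.mono fun j hj => by linarith [hl.1]) (hB.mono fun j hj => by linarith [hr.2])
      have hsm : ∀ᶠ j in atTop, |y (j+1) - y j| < |T p - p| / 2 := by
        have := hstep.abs
        rw [abs_zero] at this
        exact this.eventually_lt_const hpos
      obtain ⟨j, ⟨hj1, hj2⟩, hj3⟩ := (hfr.and_eventually hsm).exists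
      have := (hball (y := y j) (by rw [Real.dist_eq, abs_lt]; constructor <;> linarith)).1
      rw [hyit] at hj3
      linarith
    have hfr := ms_cross y hstep ((2*a+b)/3) ((a+2*b)/3) (by linarith)
      (hA.mono fun j hj => by linarith) (hB.mono fun j hj => by linarith)
    obtain ⟨j, hj1, hj2⟩ := hfr.exists
    have hc := hconst j (hfix _ (by linarith) (by linarith))
    obtain ⟨m, hm, hma⟩ := frequently_atTop.1 hA j
    rw [hc m hm] at hma
    linarith
  obtain ⟨s, hs⟩ := hlim
  have hTs : T s = s := by
    have h1 : Tendsto (fun j => T (y j)) atTop (nhds (T s)) := (hTc.tendsto s).comp hs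
    have h2 : Tendsto (fun j => y (j+1)) atTop (nhds s) := (tendsto_add_atTop_iff_nat 1).2 hs
    simp only [hyit] at h2
    exact tendsto_nhds_unique h1 h2
  -- monotonicity of T
  have hmon : ∀ a b d, a ≤ b → (∀ i, (x i ≤ a ∧ x i ≤ d) ∨ (b ≤ x i ∧ d ≤ x i)) →
      G a * (T a - d) ≤ G b * (T b - d) := by
    intro a b d hab hi
    rw [← hS, ← hS]
    refine Finset.sum_le_sum fun i _ => ?_
    rcases hi i with ⟨h1, h2⟩ | ⟨h1, h2⟩
    · refine mul_le_mul_of_nonpos_left ?_ (by linarith)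
      refine hg_anti.antitoneOn (Set.mem_Ici.2 (sq_nonneg _)) (Set.mem_Ici.2 (sq_nonneg _)) ?_
      rw [div_pow, div_pow]
      gcongr
    · refine mul_le_mul_of_nonneg_left ?_ (by linarith)
      refine hg_anti.antitoneOn (Set.mem_Ici.2 (sq_nonneg _)) (Set.mem_Ici.2 (sq_nonneg _)) ?_
      rw [div_pow, div_pow]
      gcongr ?_ / _
      nlinarith
  have hup : ∀ a b d, a ≤ b → (∀ i, (x i ≤ a ∧ x i ≤ d) ∨ (b ≤ x i ∧ d ≤ x i)) →
      d ≤ T a → d ≤ T b := by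
    intro a b d hab hi hd
    have h1 := hmon a b d hab hi
    have h2 := mul_nonneg (hGp a).le (sub_nonneg.2 hd)
    have := nonneg_of_mul_nonneg_right (h2.trans h1) (hGp b)
    linarith
  have hdown : ∀ a b d, a ≤ b → (∀ i, (x i ≤ a ∧ x i ≤ d) ∨ (b ≤ x i ∧ d ≤ x i)) →
      T b ≤ d → T a ≤ d := by
    intro a b d hab hi hd
    have h1 := hmon a b d hab hi
    by_contra hcon
    have h2 := mul_pos (hGp a) (sub_pos.2 (not_le.1 hcon))
    have h3 := mul_nonneg (hGp b).le (sub_nonneg.2 hd)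
    nlinarith
  have hP : ∀ᶠ j in atTop, ∀ i, (s < x i → y j ≤ x i) ∧ (x i < s → x i ≤ y j) := by
    refine eventually_all.2 fun i => ?_
    refine Filter.Eventually.and ?_ ?_
    · by_cases hsi : s < x i
      · exact (hs.eventually_lt_const hsi).mono fun j hj _ => hj.le
      · exact Eventually.of_forall fun j hj => absurd hj hsi
    · by_cases hsi : x i < s
      · exact (hs.eventually_const_lt hsi).mono fun j hj _ => hj.le
      · exact Eventually.of_forall fun j hj => absurd hj hsi
  obtain ⟨N, hN⟩ := eventually_atTop.1 hP
  refine ⟨N, ?_, s, hs⟩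
  -- a common interval free of data points in its interior
  have hfin : (∀ a b d : ℕ, N ≤ a → N ≤ b → N ≤ d → ∀ i,
      (x i ≤ y a ∧ x i ≤ y d) ∨ (y b ≤ x i ∧ y d ≤ x i)) →
      ((∀ j ≥ N, y j ≤ y (j + 1)) ∨ (∀ j ≥ N, y (j + 1) ≤ y j)) := by
    intro hsep
    rcases le_total (y N) (y (N+1)) with h0 | h0
    · left
      intro j hj
      induction j, hj using Nat.le_induction with
      | base => exact h0
      | succ j hj ih =>
        rw [hyit (j+1)]
        exact hup (y j) (y (j+1)) (y (j+1)) ih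
          (hsep j (j+1) (j+1) hj (by omega) (by omega)) (hyit j).le
    · right
      intro j hj
      induction j, hj using Nat.le_induction with
      | base => exact h0
      | succ j hj ih =>
        rw [hyit (j+1)]
        exact hdown (y (j+1)) (y j) (y (j+1)) ih
          (hsep (j+1) j (j+1) (by omega) hj (by omega)) (hyit j).ge
  apply hfin
  rcases le_total s (y N) with h0 | h0
  · have hR : ∀ j ≥ N, s ≤ y j := by
      intro j hj
      induction j, hj using Nat.le_induction with
      | base => exact h0
      | succ j hj ih =>
        rw [hyit]
        refine hup s (y j) s ih (fun i => ?_) hTs.ge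
        rcases le_or_gt (x i) s with hx | hx
        · exact Or.inl ⟨hx, hx⟩
        · exact Or.inr ⟨(hN j hj i).1 hx, hx.le⟩
    intro a b d ha hb hd i
    rcases le_or_gt (x i) s with hx | hx
    · exact Or.inl ⟨hx.trans (hR a ha), hx.trans (hR d hd)⟩
    · exact Or.inr ⟨(hN b hb i).1 hx, (hN d hd i).1 hx⟩
  · have hR : ∀ j ≥ N, y j ≤ s := by
      intro j hj
      induction j, hj using Nat.le_induction with
      | base => exact h0
      | succ j hj ih =>
        rw [hyit]
        refine hdown (y j) s s ih (fun i => ?_) hTs.le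
        rcases le_or_gt s (x i) with hx | hx
        · exact Or.inr ⟨hx, hx⟩
        · exact Or.inl ⟨(hN j hj i).2 hx, hx.le⟩
    intro a b d ha hb hd i
    rcases le_or_gt s (x i) with hx | hx
    · exact Or.inr ⟨(hR b hb).trans hx, (hR d hd).trans hx⟩
    · exact Or.inl ⟨(hN a ha i).2 hx, (hN d hd i).2 hx⟩
end

section
/- Suppose y ≤ T(y) and no data point lies strictly between y and T(y) (i.e., there is no x_i with y < x_i < T(y)). Then T(T(y)) ≥ T(y). -/
open Finset

theorem mean_shift_step_monotone_up
(n : ℕ) (hn : 0 < n) (x : Fin n → ℝ) (h : ℝ) (hh : 0 < h)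
(g : ℝ → ℝ)
    (hg_pos : ∀ t ∈ Set.Ici (0:ℝ), 0 < g t)
    (hg_anti : StrictAntiOn g (Set.Ici 0))
    (T : ℝ → ℝ)
    (hT : ∀ z, T z = (∑ i, x i * g (((z - x i) / h) ^ 2)) / (∑ i, g (((z - x i) / h) ^ 2)))
    (y : ℝ) (hy : y ≤ T y)
    (hno : ¬ ∃ i, y < x i ∧ x i < T y) :
    T y ≤ T (T y) := by
  haveI : Nonempty (Fin n) := ⟨⟨0, hn⟩⟩
  have hgp : ∀ z i, 0 < g (((z - x i) / h) ^ 2) := fun z i =>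
    hg_pos _ (Set.mem_Ici.2 (sq_nonneg _))
  have hS : ∀ z, 0 < ∑ i, g (((z - x i) / h) ^ 2) := fun z =>
    Finset.sum_pos (fun i _ => hgp z i) Finset.univ_nonempty
  have h1 : T y * (∑ i, g (((y - x i) / h) ^ 2)) = ∑ i, x i * g (((y - x i) / h) ^ 2) := by
    rw [hT y, div_mul_cancel₀ _ (hS y).ne']
  generalize T y = z at *
  rw [hT z, le_div_iff₀ (hS z)]
  have key : ∀ i, (x i - z) * g (((y - x i) / h) ^ 2) ≤ (x i - z) * g (((z - x i) / h) ^ 2) := by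
    intro i
    rcases le_or_gt (x i) y with hi | hi
    · apply mul_le_mul_of_nonpos_left _ (by linarith)
      apply hg_anti.antitoneOn (Set.mem_Ici.2 (sq_nonneg _)) (Set.mem_Ici.2 (sq_nonneg _))
      rw [div_pow, div_pow]
      apply div_le_div_of_nonneg_right _ (sq_nonneg h)
      nlinarith
    · have hi2 : z ≤ x i := by
        by_contra hc
        exact hno ⟨i, hi, not_le.1 hc⟩
      apply mul_le_mul_of_nonneg_left _ (by linarith)
      apply hg_anti.antitoneOn (Set.mem_Ici.2 (sq_nonneg _)) (Set.mem_Ici.2 (sq_nonneg _))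
      rw [div_pow, div_pow]
      apply div_le_div_of_nonneg_right _ (sq_nonneg h)
      nlinarith
  have hsum := Finset.sum_le_sum (fun i (_ : i ∈ Finset.univ) => key i)
  simp only [sub_mul, Finset.sum_sub_distrib, ← Finset.mul_sum] at hsum
  linarith
end

section
/- Suppose T(y) ≤ y and no data point lies strictly between T(y) and y (i.e., there is no x_i with T(y) < x_i < y). Then T(T(y)) ≤ T(y). -/
open Finset

theorem mean_shift_step_monotone_down
(n : ℕ) (hn : 0 < n) (x : Fin n → ℝ) (h : ℝ) (hh : 0 < h)
(g : ℝ → ℝ)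
    (hg_pos : ∀ t ∈ Set.Ici (0:ℝ), 0 < g t)
    (hg_anti : StrictAntiOn g (Set.Ici 0))
    (T : ℝ → ℝ)
    (hT : ∀ z, T z = (∑ i, x i * g (((z - x i) / h) ^ 2)) / (∑ i, g (((z - x i) / h) ^ 2)))
    (y : ℝ) (hy : T y ≤ y)
    (hno : ¬ ∃ i, T y < x i ∧ x i < y) :
    T (T y) ≤ T y := by
  have hpos : ∀ z, 0 < ∑ i, g (((z - x i) / h) ^ 2) := by
    intro z
    have : Nonempty (Fin n) := ⟨⟨0, hn⟩⟩
    exact Finset.sum_pos (fun i _ => hg_pos _ (Set.mem_Ici.mpr (sq_nonneg _))) Finset.univ_nonempty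
  have h1 := hT y
  rw [eq_div_iff (hpos y).ne'] at h1
  rw [hT (T y), div_le_iff₀ (hpos _)]
  generalize T y = m at *
  have key : ∀ a b : ℝ, |a| ≤ |b| → g ((b / h) ^ 2) ≤ g ((a / h) ^ 2) := by
    intro a b hab
    apply hg_anti.antitoneOn (Set.mem_Ici.mpr (sq_nonneg (a / h))) (Set.mem_Ici.mpr (sq_nonneg (b / h)))
    rw [div_pow, div_pow]
    exact div_le_div_of_nonneg_right (sq_le_sq.mpr hab) (sq_nonneg h)
  have h2 : ∑ i, (x i - m) * g (((m - x i) / h) ^ 2) ≤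
      ∑ i, (x i - m) * g (((y - x i) / h) ^ 2) := by
    apply Finset.sum_le_sum
    intro i _
    rcases le_or_gt (x i) m with hi | hi
    · apply mul_le_mul_of_nonpos_left _ (by linarith)
      apply key
      rw [abs_of_nonneg (by linarith), abs_of_nonneg (by linarith)]
      linarith
    · have hi2 : y ≤ x i := by
        by_contra hc
        exact hno ⟨i, hi, not_le.mp hc⟩
      apply mul_le_mul_of_nonneg_left _ (by linarith)
      apply key
      rw [abs_of_nonpos (by linarith), abs_of_nonpos (by linarith)]
      linarith
  simp only [sub_mul, Finset.sum_sub_distrib, ← Finset.mul_sum] at h2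
  linarith
end

section
/- For every y ∈ ℝ, the derivative of the kernel density estimate satisfies f'(y) = (2c/(n h³)) · (T(y) − y) · Σ_{i=1}^n g(((y − x_i)/h)²). In particular, since g > 0, the sign of f'(y) equals the sign of the mean shift T(y) − y. -/
open Finset

theorem mean_shift_deriv_formula
(n : ℕ) (hn : 0 < n) (x : Fin n → ℝ) (h : ℝ) (hh : 0 < h)
(c : ℝ) (hc : 0 < c)
    (k g : ℝ → ℝ)
    (hk_nonneg : ∀ t ∈ Set.Ici (0:ℝ), 0 ≤ k t)
    (hk_diff : Differentiable ℝ k)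
    (hg : ∀ t, g t = -(deriv k t))
    (hg_pos : ∀ t ∈ Set.Ici (0:ℝ), 0 < g t)
    (f T : ℝ → ℝ)
    (hf : ∀ z, f z = c / (n * h) * ∑ i, k (((z - x i) / h) ^ 2))
    (hT : ∀ z, T z = (∑ i, x i * g (((z - x i) / h) ^ 2)) / (∑ i, g (((z - x i) / h) ^ 2)))
    (y : ℝ) :
    deriv f y = 2 * c / (n * h ^ 3) * (T y - y) * ∑ i, g (((y - x i) / h) ^ 2) ∧
      Real.sign (deriv f y) = Real.sign (T y - y) := by
  have hn' : (0:ℝ) < n := by exact_mod_cast hn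
  have hS : 0 < ∑ i, g (((y - x i) / h) ^ 2) := by
    apply Finset.sum_pos
    · intro i _
      exact hg_pos _ (Set.mem_Ici.2 (sq_nonneg _))
    · exact ⟨⟨0, hn⟩, Finset.mem_univ _⟩
  have hterm : ∀ i, HasDerivAt (fun z => k (((z - x i) / h) ^ 2))
      (2 / h ^ 2 * (x i * g (((y - x i) / h) ^ 2) - y * g (((y - x i) / h) ^ 2))) y := by
    intro i
    have h1 : HasDerivAt (fun z => ((z - x i) / h) ^ 2) (2 * ((y - x i) / h) * (1 / h)) y := by
      have := (((hasDerivAt_id y).sub_const (x i)).div_const h).fun_pow 2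
      simpa using this
    have h2 := (hk_diff (((y - x i) / h) ^ 2)).hasDerivAt.comp y h1
    refine h2.congr_deriv ?_
    rw [hg]
    field_simp
    ring
  have hd : HasDerivAt f (c / (n * h) * ∑ i, (2 / h ^ 2 *
      (x i * g (((y - x i) / h) ^ 2) - y * g (((y - x i) / h) ^ 2)))) y := by
    rw [funext hf]
    exact (HasDerivAt.fun_sum fun i _ => hterm i).const_mul _
  have key : deriv f y
      = 2 * c / (n * h ^ 3) * (T y - y) * ∑ i, g (((y - x i) / h) ^ 2) := by
    rw [hd.deriv, hT, ← Finset.mul_sum, Finset.sum_sub_distrib, ← Finset.mul_sum]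
    have hne := hS.ne'
    generalize ∑ i, g (((y - x i) / h) ^ 2) = S at hne ⊢
    generalize ∑ i, x i * g (((y - x i) / h) ^ 2) = R
    field_simp
  refine ⟨key, ?_⟩
  have hp : 0 < 2 * c / (n * h ^ 3) * ∑ i, g (((y - x i) / h) ^ 2) := by positivity
  have e : deriv f y = (2 * c / (n * h ^ 3) * ∑ i, g (((y - x i) / h) ^ 2)) * (T y - y) := by
    rw [key]; ring
  rw [e]
  rcases lt_trichotomy (T y - y) 0 with h0 | h0 | h0
  · rw [Real.sign_of_neg h0, Real.sign_of_neg (mul_neg_of_pos_of_neg hp h0)]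
  · rw [h0, mul_zero]
  · rw [Real.sign_of_pos h0, Real.sign_of_pos (mul_pos hp h0)]
end

section
/- A point x* ∈ ℝ is a stationary point of the kernel density estimate (f'(x*) = 0) if and only if x* is a fixed point of the mean shift map, i.e., x* = (Σ_{i=1}^n x_i g(((x* - x_i)/h)²)) / (Σ_{i=1}^n g(((x* - x_i)/h)²)). -/
open Finset

theorem mean_shift_stationary_iff_fixed_point
(n : ℕ) (hn : 0 < n) (x : Fin n → ℝ) (h : ℝ) (hh : 0 < h)
    (c : ℝ) (hc : 0 < c)
    (k g : ℝ → ℝ)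
    (hk_nonneg : ∀ t ∈ Set.Ici (0:ℝ), 0 ≤ k t)
    (hk_diff : Differentiable ℝ k)
    (hg : ∀ t, g t = -(deriv k t))
    (hg_pos : ∀ t ∈ Set.Ici (0:ℝ), 0 < g t)
    (f : ℝ → ℝ)
    (hf : ∀ z, f z = c / (n * h) * ∑ i, k (((z - x i) / h) ^ 2))
    (xstar : ℝ) :
    deriv f xstar = 0 ↔
      xstar = (∑ i, x i * g (((xstar - x i) / h) ^ 2)) /
        (∑ i, g (((xstar - x i) / h) ^ 2)) := by
  have hS : 0 < ∑ i, g (((xstar - x i) / h) ^ 2) := by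
    have : Nonempty (Fin n) := ⟨⟨0, hn⟩⟩
    exact Finset.sum_pos (fun i _ => hg_pos _ (Set.mem_Ici.mpr (sq_nonneg _))) Finset.univ_nonempty
  have hn' : (0:ℝ) < n := by exact_mod_cast hn
  have hd : HasDerivAt f (c / (n * h) * ∑ i, deriv k (((xstar - x i) / h) ^ 2) *
      (2 * ((xstar - x i) / h) * (1 / h))) xstar := by
    have hfe : f = fun z => c / (n * h) * ∑ i, k (((z - x i) / h) ^ 2) := funext hf
    rw [hfe]
    refine HasDerivAt.const_mul _ (HasDerivAt.fun_sum fun i _ => ?_)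
    have h1 : HasDerivAt (fun z : ℝ => ((z - x i) / h) ^ 2)
        (2 * ((xstar - x i) / h) * (1 / h)) xstar := by
      have h2 := (((hasDerivAt_id xstar).sub_const (x i)).div_const h).fun_pow 2
      simpa using h2
    exact (hk_diff _).hasDerivAt.comp xstar h1
  have he : c / (n * h) * ∑ i, deriv k (((xstar - x i) / h) ^ 2) *
      (2 * ((xstar - x i) / h) * (1 / h)) =
      (c / (n * h) * (2 / h ^ 2)) * ((∑ i, x i * g (((xstar - x i) / h) ^ 2)) -
        xstar * ∑ i, g (((xstar - x i) / h) ^ 2)) := by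
    rw [mul_assoc, Finset.mul_sum (a := xstar), ← Finset.sum_sub_distrib,
      Finset.mul_sum (a := 2 / h ^ 2)]
    congr 1
    refine Finset.sum_congr rfl fun i _ => ?_
    rw [hg]
    generalize deriv k (((xstar - x i) / h) ^ 2) = d
    field_simp
    ring
  have hC : c / (n * h) * (2 / h ^ 2) ≠ 0 := by positivity
  rw [hd.deriv, he, mul_eq_zero, or_iff_right hC, sub_eq_zero, eq_div_iff hS.ne', eq_comm]
end

section
/- The sequence of density values (f(y_j))_{j≥1} along the mean shift sequence is non-decreasing and bounded above, hence convergent. -/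
open Filter Finset

theorem mean_shift_density_values_converge
(n : ℕ) (hn : 0 < n) (x : Fin n → ℝ) (h : ℝ) (hh : 0 < h)
(c : ℝ) (hc : 0 < c)
    (k g : ℝ → ℝ)
    (hk_nonneg : ∀ t ∈ Set.Ici (0:ℝ), 0 ≤ k t)
    (hk_conv : ConvexOn ℝ (Set.Ici 0) k)
    (hk_diff : Differentiable ℝ k)
    (hk_anti : StrictAntiOn k (Set.Ici 0))
    (hg : ∀ t, g t = -(deriv k t))
    (hg_pos : ∀ t ∈ Set.Ici (0:ℝ), 0 < g t)
    (f T : ℝ → ℝ)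
    (hf : ∀ z, f z = c / (n * h) * ∑ i, k (((z - x i) / h) ^ 2))
    (hT : ∀ z, T z = (∑ i, x i * g (((z - x i) / h) ^ 2)) / (∑ i, g (((z - x i) / h) ^ 2)))
(y : ℕ → ℝ) (hy0 : ∃ i, y 0 = x i) (hyit : ∀ j, y (j + 1) = T (y j)) :
    Monotone (fun j => f (y j)) ∧ BddAbove (Set.range (fun j => f (y j))) ∧
      ∃ L : ℝ, Tendsto (fun j => f (y j)) atTop (nhds L) := by
  have tang : ∀ a b : ℝ, 0 ≤ a → 0 ≤ b → k a + g a * (a - b) ≤ k b := by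
    intro a b ha hb
    have hd := (hk_diff a).hasDerivAt
    rw [hg]
    rcases lt_trichotomy a b with hab | hab | hab
    · have h1 := hk_conv.le_slope_of_hasDerivAt ha hb hab hd
      rw [slope_def_field, le_div_iff₀ (by linarith)] at h1
      linarith
    · subst hab; simp
    · have h1 := hk_conv.slope_le_of_hasDerivAt hb ha hab hd
      rw [slope_def_field, div_le_iff₀ (by linarith)] at h1
      linarith
  have hn' : (0:ℝ) < n := by exact_mod_cast hn
  have hcn : 0 ≤ c / (n * h) := by positivity
  have step : ∀ z, f z ≤ f (T z) := by
    intro z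
    rw [hf z, hf (T z)]
    refine mul_le_mul_of_nonneg_left ?_ hcn
    have hGpos : 0 < ∑ i, g (((z - x i) / h) ^ 2) :=
      Finset.sum_pos (fun i _ => hg_pos _ (Set.mem_Ici.2 (sq_nonneg _))) ⟨⟨0, hn⟩, Finset.mem_univ _⟩
    have hTz := hT z
    rw [eq_div_iff hGpos.ne'] at hTz
    generalize T z = w at *
    have h1 : ∑ i, (k (((z - x i) / h) ^ 2) + g (((z - x i) / h) ^ 2) *
        (((z - x i) / h) ^ 2 - ((w - x i) / h) ^ 2)) ≤ ∑ i, k (((w - x i) / h) ^ 2) :=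
      Finset.sum_le_sum (fun i _ => tang _ _ (sq_nonneg _) (sq_nonneg _))
    have h2 : ∑ i, g (((z - x i) / h) ^ 2) * (((z - x i) / h) ^ 2 - ((w - x i) / h) ^ 2)
        = ((z - w) / h) ^ 2 * ∑ i, g (((z - x i) / h) ^ 2) := by
      have h3 : ∀ i, g (((z - x i) / h) ^ 2) * (((z - x i) / h) ^ 2 - ((w - x i) / h) ^ 2)
          = ((z - w) / h) ^ 2 * g (((z - x i) / h) ^ 2) + 2 * (z - w) / h ^ 2 *
            (w * g (((z - x i) / h) ^ 2) - x i * g (((z - x i) / h) ^ 2)) := by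
        intro i
        generalize g (((z - x i) / h) ^ 2) = r
        field_simp
        ring
      rw [Finset.sum_congr rfl (fun i _ => h3 i), Finset.sum_add_distrib, ← Finset.mul_sum,
        ← Finset.mul_sum, Finset.sum_sub_distrib, ← Finset.mul_sum, hTz]
      ring
    rw [Finset.sum_add_distrib, h2] at h1
    have h4 := mul_nonneg (sq_nonneg ((z - w) / h)) hGpos.le
    linarith
  have hmono : Monotone (fun j => f (y j)) := by
    apply monotone_nat_of_le_succ
    intro j
    simp only [hyit j]
    exact step _
  have hb : BddAbove (Set.range (fun j => f (y j))) := by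
    refine ⟨c / (n * h) * ∑ _i : Fin n, k 0, ?_⟩
    rintro _ ⟨j, rfl⟩
    simp only [hf]
    refine mul_le_mul_of_nonneg_left (Finset.sum_le_sum fun i _ => ?_) hcn
    exact hk_anti.antitoneOn (Set.mem_Ici.2 le_rfl) (Set.mem_Ici.2 (sq_nonneg _)) (sq_nonneg _)
  exact ⟨hmono, hb, _, tendsto_atTop_ciSup hmono hb⟩
end

section
/- The derivative of the kernel density estimate evaluated along the mean shift sequence tends to zero: f'(y_j) → 0 as j → ∞. -/
open Filter Finset

theorem convex_tangent_aux (k : ℝ → ℝ) (hc : ConvexOn ℝ (Set.Ici 0) k) (hd : Differentiable ℝ k)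
    (a b : ℝ) (ha : 0 ≤ a) (hb : 0 ≤ b) : -(deriv k a) * (a - b) ≤ k b - k a := by
  rcases lt_trichotomy a b with hab | hab | hab
  · have := hc.le_slope_of_hasDerivAt (x := a) (y := b) ha hb hab (hd a).hasDerivAt
    rw [slope_def_field, le_div_iff₀ (by linarith)] at this
    linarith
  · subst hab; simp
  · have := hc.slope_le_of_hasDerivAt (x := b) (y := a) hb ha hab (hd a).hasDerivAt
    rw [slope_def_field, div_le_iff₀ (by linarith)] at this
    linarith

theorem mean_shift_deriv_tendsto_zero
(n : ℕ) (hn : 0 < n) (x : Fin n → ℝ) (h : ℝ) (hh : 0 < h)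
(c : ℝ) (hc : 0 < c)
    (k g : ℝ → ℝ)
    (hk_nonneg : ∀ t ∈ Set.Ici (0:ℝ), 0 ≤ k t)
    (hk_conv : ConvexOn ℝ (Set.Ici 0) k)
    (hk_smooth : ContDiff ℝ 1 k)
    (hk_anti : StrictAntiOn k (Set.Ici 0))
    (hg : ∀ t, g t = -(deriv k t))
    (hg_pos : ∀ t ∈ Set.Ici (0:ℝ), 0 < g t)
    (hg_anti : StrictAntiOn g (Set.Ici 0))
    (f T : ℝ → ℝ)
    (hf : ∀ z, f z = c / (n * h) * ∑ i, k (((z - x i) / h) ^ 2))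
    (hT : ∀ z, T z = (∑ i, x i * g (((z - x i) / h) ^ 2)) / (∑ i, g (((z - x i) / h) ^ 2)))
(y : ℕ → ℝ) (hy0 : ∃ i, y 0 = x i) (hyit : ∀ j, y (j + 1) = T (y j)) :
    Tendsto (fun j => deriv f (y j)) atTop (nhds 0) := by
  have hd : Differentiable ℝ k := hk_smooth.differentiable (by norm_num)
  obtain ⟨A, hAdef⟩ : ∃ A, A = c / (n * h) := ⟨_, rfl⟩
  have hA : 0 < A := by rw [hAdef]; positivity
  rw [← hAdef] at hf
  have : Nonempty (Fin n) := ⟨⟨0, hn⟩⟩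
  obtain ⟨S, hS⟩ : ∃ S : ℝ → ℝ, ∀ z, S z = ∑ i, g (((z - x i) / h) ^ 2) := ⟨_, fun _ => rfl⟩
  have hSpos : ∀ z, 0 < S z := fun z => by
    rw [hS]; exact Finset.sum_pos (fun i _ => hg_pos _ (Set.mem_Ici.2 (sq_nonneg _))) univ_nonempty
  have hSle : ∀ z, S z ≤ n * g 0 := fun z => by
    rw [hS]
    calc _ ≤ ∑ i : Fin n, g 0 := Finset.sum_le_sum fun i _ =>
            hg_anti.antitoneOn (Set.mem_Ici.2 le_rfl) (Set.mem_Ici.2 (sq_nonneg _)) (sq_nonneg _)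
      _ = _ := by simp
  have hTS : ∀ z, ∑ i, x i * g (((z - x i) / h) ^ 2) = S z * T z := fun z => by
    rw [hT, ← hS]; have := (hSpos z).ne'; field_simp
  have hderiv : ∀ z, deriv f z = 2 * A / h ^ 2 * (S z * (T z - z)) := fun z => by
    have h1 : ∀ i, HasDerivAt (fun z => k (((z - x i) / h) ^ 2))
        (-g (((z - x i) / h) ^ 2) * (2 * ((z - x i) / h) * (1 / h))) z := fun i => by
      have e1 : HasDerivAt (fun z => ((z - x i) / h) ^ 2) (2 * ((z - x i) / h) * (1 / h)) z := by
        simpa using (((hasDerivAt_id z).sub_const (x i)).div_const h).fun_pow 2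
      have := (hd (((z - x i) / h) ^ 2)).hasDerivAt.comp z e1
      rw [hg, neg_neg]; exact this
    have h2 := (HasDerivAt.fun_sum (u := univ) fun i _ => h1 i).const_mul A
    rw [funext hf, h2.deriv]
    have e : S z * (T z - z) = ∑ i, (x i * g (((z - x i) / h) ^ 2) - g (((z - x i) / h) ^ 2) * z) := by
      rw [Finset.sum_sub_distrib, hTS, ← Finset.sum_mul, ← hS]; ring
    rw [e, Finset.mul_sum, Finset.mul_sum]
    refine Finset.sum_congr rfl fun i _ => ?_
    field_simp
    ring
  have hinc : ∀ z, A / h ^ 2 * (S z * (T z - z) ^ 2) ≤ f (T z) - f z := fun z => by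
    rw [hf, hf, ← mul_sub, ← Finset.sum_sub_distrib, div_eq_mul_inv, mul_assoc]
    refine mul_le_mul_of_nonneg_left ?_ hA.le
    have e : S z * (T z - z) ^ 2 = ∑ i, (g (((z - x i) / h) ^ 2) * (z ^ 2 - T z ^ 2)
        - (x i * g (((z - x i) / h) ^ 2)) * (2 * (z - T z))) := by
      rw [Finset.sum_sub_distrib, ← Finset.sum_mul, ← Finset.sum_mul, hTS, ← hS]; ring
    rw [e, Finset.mul_sum]
    refine Finset.sum_le_sum fun i _ => ?_
    refine le_trans (le_of_eq ?_) (convex_tangent_aux k hk_conv hd _ _ (sq_nonneg _) (sq_nonneg _))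
    rw [← hg]
    field_simp
    ring
  have hmono : Monotone fun j => f (y j) := monotone_nat_of_le_succ fun j => by
    have := hinc (y j)
    have h0 : 0 ≤ A / h ^ 2 * (S (y j) * (T (y j) - y j) ^ 2) := by
      have := hSpos (y j); positivity
    rw [hyit]; linarith
  have hbdd : BddAbove (Set.range fun j => f (y j)) := by
    refine ⟨A * (n * k 0), ?_⟩
    rintro _ ⟨j, rfl⟩
    simp only [hf]
    refine mul_le_mul_of_nonneg_left ?_ hA.le
    calc _ ≤ ∑ i : Fin n, k 0 := Finset.sum_le_sum fun i _ =>
            hk_anti.antitoneOn (Set.mem_Ici.2 le_rfl) (Set.mem_Ici.2 (sq_nonneg _)) (sq_nonneg _)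
      _ = _ := by simp
  have hlim := tendsto_atTop_ciSup hmono hbdd
  have hdiff := ((hlim.comp (tendsto_add_atTop_nat 1)).sub hlim).const_mul (4 * A / h ^ 2 * (n * g 0))
  rw [sub_self, mul_zero] at hdiff
  have hsq : Tendsto (fun j => deriv f (y j) ^ 2) atTop (nhds 0) := by
    refine squeeze_zero (fun j => sq_nonneg _) (fun j => ?_) hdiff
    have h1 := hinc (y j)
    rw [← hyit] at h1
    have hs := hSpos (y j)
    simp only [Function.comp]
    rw [hderiv, ← hyit]
    calc _ = 4 * A / h ^ 2 * S (y j) * (A / h ^ 2 * (S (y j) * (y (j+1) - y j) ^ 2)) := by ring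
      _ ≤ 4 * A / h ^ 2 * (n * g 0) * (A / h ^ 2 * (S (y j) * (y (j+1) - y j) ^ 2)) := by
        gcongr; exact hSle _
      _ ≤ _ := by
        have : 0 ≤ n * g 0 := hs.le.trans (hSle _)
        gcongr
  have := hsq.sqrt
  simp only [Real.sqrt_sq_eq_abs, Real.sqrt_zero] at this
  exact (tendsto_zero_iff_abs_tendsto_zero _).2 this
end

section
/- Let m : ℝ → ℝ be differentiable, let x* satisfy m(x*) = x*, and suppose |m'(x)| > 1 for all x in [x* − ε, x* + ε] with ε > 0. If y ∈ [x* − ε, x* − ε/2] and |m(y) − y| < ε/2, then m(y) < x* − ε/2; in particular m(y) does not lie in the interval (x* − ε/2, x* + ε/2). -/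
theorem fixed_point_repelling_escapes_left
    (m : ℝ → ℝ) (hm : Differentiable ℝ m)
    (xstar : ℝ) (hfix : m xstar = xstar)
    (ε : ℝ) (hε : 0 < ε)
    (hder : ∀ z ∈ Set.Icc (xstar - ε) (xstar + ε), 1 < |deriv m z|)
    (y : ℝ) (hy : y ∈ Set.Icc (xstar - ε) (xstar - ε / 2))
    (hstep : |m y - y| < ε / 2) :
    m y < xstar - ε / 2 ∧ m y ∉ Set.Ioo (xstar - ε / 2) (xstar + ε / 2) := by
  obtain ⟨h1, h2⟩ := hy
  have hlt : y < xstar := by linarith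
  obtain ⟨c, hc, hd⟩ := exists_deriv_eq_slope m hlt hm.continuous.continuousOn
    hm.differentiableOn
  have h := hder c ⟨by linarith [hc.1], by linarith [hc.2]⟩
  have hpos : 0 < xstar - y := by linarith
  rw [hd, hfix, abs_div, abs_of_pos hpos, lt_div_iff₀ hpos, one_mul] at h
  have hs := abs_lt.mp hstep
  have key : m y < xstar - ε / 2 := by
    rcases lt_abs.mp h with h | h <;> linarith [hs.1, hs.2]
  exact ⟨key, fun hmem => by linarith [hmem.1]⟩
end
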